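/- Let a, b, b' be complex numbers with a not a nonpositive integer, and let x, y be real numbers with |x| + |y| < 1 such that |xy/((1−x)(1−y))| < 1. Then F₂(a; b, b'; a, a; x, y) = (1−x)^{−b} (1−y)^{−b'} · ₂F₁(b, b'; a; xy/((1−x)(1−y))). -/

import Mathlib

noncomputable def poch (a : ℂ) (n : ℕ) : ℂ := ∏ i ∈ Finset.range n, (a + i)

/-- Gauss hypergeometric series ₂F₁(a,b;c;x). -/
noncomputable def hyp2F1 (a b c x : ℂ) : ℂ :=
  ∑' n : ℕ, poch a n * poch b n / (n.factorial * poch c n) * x ^ n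

/-- Appell series F₂(a;b,b';c,c';x,y). -/
noncomputable def appellF2 (a b b' c c' x y : ℂ) : ℂ :=
  ∑' p : ℕ × ℕ, poch a (p.1 + p.2) * poch b p.1 * poch b' p.2 /
    (p.1.factorial * p.2.factorial * poch c p.1 * poch c' p.2) * x ^ p.1 * y ^ p.2


open Filter Topology

lemma poch_zero' (a : ℂ) : poch a 0 = 1 := by simp [poch]

lemma poch_succ_right (a : ℂ) (n : ℕ) : poch a (n + 1) = poch a n * (a + n) := by
  simp [poch, Finset.prod_range_succ]

lemma poch_succ_left (a : ℂ) (n : ℕ) : poch a (n + 1) = a * poch (a + 1) n := by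
  rw [poch, Finset.prod_range_succ', mul_comm, poch]
  congr 1
  · simp
  · refine Finset.prod_congr rfl fun i _ => ?_
    push_cast; ring

lemma poch_add (a : ℂ) (m n : ℕ) : poch a (m + n) = poch a m * poch (a + m) n := by
  rw [poch, Finset.prod_range_add, poch, poch]
  congr 1
  refine Finset.prod_congr rfl fun i _ => ?_
  push_cast; ring

lemma poch_ne_zero {a : ℂ} (ha : ∀ n : ℕ, a ≠ -(n : ℂ)) (n : ℕ) : poch a n ≠ 0 := by
  rw [poch, Finset.prod_ne_zero_iff]
  intro i _ h
  exact ha i (eq_neg_of_add_eq_zero_left h)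

/-- Chu-Vandermonde. -/
lemma poch_vandermonde (m : ℕ) : ∀ (n : ℕ) (a : ℂ), (∀ n : ℕ, a ≠ -(n : ℂ)) →
    poch (a + m) n = poch a n * ∑ k ∈ Finset.range (m + 1),
      (m.choose k : ℂ) * n.choose k * k.factorial / poch a k := by
  induction m with
  | zero => intro n a ha; simp [poch_zero']
  | succ m ih =>
    intro n a ha
    have ha1 : ∀ n : ℕ, a + 1 ≠ -(n : ℂ) := by
      intro n h
      apply ha (n + 1)
      push_cast
      linear_combination h
    have ha0 : a ≠ 0 := by simpa using ha 0
    have hS : ∑ k ∈ Finset.range (m + 1 + 1),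
        ((m + 1).choose k : ℂ) * n.choose k * k.factorial / poch a k =
        (∑ k ∈ Finset.range (m + 1), (m.choose k : ℂ) * n.choose k * k.factorial / poch a k) +
        ∑ k ∈ Finset.range (m + 1),
          (m.choose k : ℂ) * n.choose (k + 1) * (k + 1).factorial / poch a (k + 1) := by
      have h1 : (∑ k ∈ Finset.range (m + 1), (m.choose k : ℂ) * n.choose k * k.factorial / poch a k)
          = ∑ k ∈ Finset.range (m + 1 + 1),
            (m.choose k : ℂ) * n.choose k * k.factorial / poch a k := by
        rw [Finset.sum_range_succ _ (m + 1)]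
        simp
      rw [h1, Finset.sum_range_succ', Finset.sum_range_succ' _ (m + 1), add_right_comm,
        ← Finset.sum_add_distrib]
      congr 1
      · refine Finset.sum_congr rfl fun k _ => ?_
        rw [Nat.choose_succ_succ]
        push_cast; ring
      · simp
    rw [hS, mul_add, ← ih n a ha]
    cases n with
    | zero => simp [poch_zero']
    | succ n =>
      have h2 : poch a (n + 1) * ∑ k ∈ Finset.range (m + 1),
          (m.choose k : ℂ) * (n + 1).choose (k + 1) * (k + 1).factorial / poch a (k + 1)
          = (n + 1) * poch (a + 1 + m) n := by
        rw [ih n (a + 1) ha1, poch_succ_left a n, Finset.mul_sum, Finset.mul_sum, Finset.mul_sum]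
        refine Finset.sum_congr rfl fun k _ => ?_
        have h3 : ((n + 1).choose (k + 1) : ℂ) * (k + 1) = (n + 1) * n.choose k := by
          exact_mod_cast (Nat.add_one_mul_choose_eq n k).symm
        rw [poch_succ_left a k, Nat.factorial_succ]
        have := poch_ne_zero ha1 k
        push_cast
        field_simp
        linear_combination (m.choose k : ℂ) * k.factorial * poch (a + 1) n * h3
      rw [h2, poch_succ_left (a + m), poch_succ_right]
      rw [show a + ((m + 1 : ℕ) : ℂ) = a + 1 + m by push_cast; ring,
        show a + (m : ℂ) + 1 = a + 1 + m by ring]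
      ring

lemma choose_eq_poch (b : ℂ) (n : ℕ) : Ring.choose (b + n - 1) n = poch b n / n.factorial := by
  rw [eq_div_iff (by exact_mod_cast n.factorial_ne_zero), ← Ring.multichoose_eq, mul_comm,
    ← nsmul_eq_mul, Ring.factorial_nsmul_multichoose_eq_ascPochhammer,
    Polynomial.ascPochhammer_smeval_eq_eval]
  induction n with
  | zero => simp [poch_zero']
  | succ n ih => rw [ascPochhammer_succ_eval, ih, poch_succ_right]

lemma hasSum_binomial (b x : ℂ) (hx : ‖x‖ < 1) :
    HasSum (fun n : ℕ => poch b n / n.factorial * x ^ n) ((1 - x) ^ (-b)) := by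
  have h := (Complex.one_div_one_sub_cpow_hasFPowerSeriesOnBall_zero b).hasSum (y := x)
    (by simpa [Metric.mem_eball, edist_zero_right, enorm_eq_nnnorm, ← NNReal.coe_lt_one] using hx)
  simp only [zero_add] at h
  rw [one_div, ← Complex.cpow_neg] at h
  simpa [FormalMultilinearSeries.ofScalars_apply_eq', choose_eq_poch, mul_comm] using h

noncomputable def rpoch (B : ℝ) (n : ℕ) : ℝ := ∏ i ∈ Finset.range n, (B + i)

lemma rpoch_cast (B : ℝ) (n : ℕ) : poch (B : ℂ) n = (rpoch B n : ℂ) := by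
  simp [poch, rpoch]

lemma norm_poch_le (b : ℂ) (k n : ℕ) : ‖poch (b + k) n‖ ≤ rpoch (‖b‖ + k) n := by
  rw [poch, rpoch, norm_prod]
  refine Finset.prod_le_prod (fun _ _ => norm_nonneg _) fun i _ => ?_
  refine (norm_add_le _ _).trans ?_
  gcongr
  · refine (norm_add_le _ _).trans ?_
    simp
  · simp

lemma hasSum_real (B t : ℝ) (h0 : 0 ≤ t) (h1 : t < 1) :
    HasSum (fun n : ℕ => rpoch B n / n.factorial * t ^ n) ((1 - t) ^ (-B)) := by
  have h := hasSum_binomial B t (by simpa [abs_of_nonneg h0] using h1)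
  rw [← Complex.hasSum_ofReal]
  rw [Complex.ofReal_cpow (by linarith)]
  push_cast
  simpa only [rpoch_cast] using h

lemma summable_inner (b : ℂ) (x : ℝ) (hx : |x| < 1) (k : ℕ) :
    Summable (fun i : ℕ => ‖poch (b + k) i / i.factorial * (x : ℂ) ^ i‖) ∧
    ∑' i : ℕ, ‖poch (b + k) i / i.factorial * (x : ℂ) ^ i‖ ≤
      (1 - |x|) ^ (-‖b‖) * ((1 - |x|)⁻¹) ^ k := by
  have h := hasSum_real (‖b‖ + k) |x| (abs_nonneg x) hx
  have hle : ∀ i : ℕ, ‖poch (b + k) i / i.factorial * (x : ℂ) ^ i‖ ≤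
      rpoch (‖b‖ + k) i / i.factorial * |x| ^ i := by
    intro i
    rw [norm_mul, norm_div, norm_pow]
    simp only [Complex.norm_natCast, Complex.norm_real, Real.norm_eq_abs]
    gcongr
    exact norm_poch_le b k i
  have hs := Summable.of_nonneg_of_le (fun i => norm_nonneg _) hle h.summable
  refine ⟨hs, ?_⟩
  have h2 := hs.tsum_le_tsum hle h.summable
  rw [h.tsum_eq] at h2
  refine h2.trans (le_of_eq ?_)
  have hp : 0 < 1 - |x| := by linarith
  rw [neg_add, Real.rpow_add hp, Real.rpow_neg hp.le (k : ℝ), Real.rpow_natCast, inv_pow]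

lemma summable_hyp (a b b' r : ℂ) (hr : ‖r‖ < 1) :
    Summable (fun k : ℕ => poch b k * poch b' k / (k.factorial * poch a k) * r ^ k) := by
  have hq : Tendsto (fun n : ℕ => ((b + 1 * n) / (1 + 1 * n)) * ((b' + 1 * n) / (a + 1 * n)) * r)
      atTop (𝓝 (1 / 1 * (1 / 1) * r)) :=
    ((tendsto_add_mul_div_add_mul_atTop_nhds b 1 1 one_ne_zero).mul
      (tendsto_add_mul_div_add_mul_atTop_nhds b' a 1 one_ne_zero)).mul_const r
  obtain ⟨ρ, h1, h2⟩ := exists_between hr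
  refine summable_of_ratio_norm_eventually_le h2 ?_
  have hq' := hq.norm
  simp only [div_one, one_mul] at hq'
  filter_upwards [hq'.eventually_le_const h1] with n hn
  have : poch b (n + 1) * poch b' (n + 1) / ((n + 1).factorial * poch a (n + 1)) * r ^ (n + 1)
      = ((b + n) / (1 + n) * ((b' + n) / (a + n)) * r) *
        (poch b n * poch b' n / (n.factorial * poch a n) * r ^ n) := by
    rw [poch_succ_right, poch_succ_right, poch_succ_right, Nat.factorial_succ]
    push_cast
    simp only [div_eq_mul_inv, mul_inv, pow_succ]
    rw [add_comm (1 : ℂ) n]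
    ring
  rw [this, norm_mul]
  exact mul_le_mul_of_nonneg_right hn (norm_nonneg _)

/-- The triple series. -/
noncomputable def tri (a b b' x y : ℂ) (q : ℕ × ℕ × ℕ) : ℂ :=
  (poch b q.1 * poch b' q.1 / (q.1.factorial * poch a q.1) * (x * y) ^ q.1) *
    ((poch (b + q.1) q.2.1 / q.2.1.factorial * x ^ q.2.1) *
      (poch (b' + q.1) q.2.2 / q.2.2.factorial * y ^ q.2.2))

lemma summable_tri (a b b' : ℂ) (x y : ℝ) (hxy : |x| + |y| < 1) :
    Summable (tri a b b' x y) := by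
  have hx : |x| < 1 := by linarith [abs_nonneg y]
  have hy : |y| < 1 := by linarith [abs_nonneg x]
  apply Summable.of_norm
  rw [summable_prod_of_nonneg (fun _ => norm_nonneg _)]
  have hin : ∀ k : ℕ, Summable fun p : ℕ × ℕ =>
      ‖poch (b + k) p.1 / p.1.factorial * (x : ℂ) ^ p.1‖ *
      ‖poch (b' + k) p.2 / p.2.factorial * (y : ℂ) ^ p.2‖ := fun k =>
    (summable_inner b x hx k).1.mul_of_nonneg (summable_inner b' y hy k).1
      (fun _ => norm_nonneg _) (fun _ => norm_nonneg _)
  have hnorm : ∀ (k : ℕ) (p : ℕ × ℕ), ‖tri a b b' x y (k, p)‖ =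
      ‖poch b k * poch b' k / (k.factorial * poch a k) * ((x : ℂ) * y) ^ k‖ *
      (‖poch (b + k) p.1 / p.1.factorial * (x : ℂ) ^ p.1‖ *
      ‖poch (b' + k) p.2 / p.2.factorial * (y : ℂ) ^ p.2‖) := by
    intro k p
    rw [tri, norm_mul, norm_mul (poch (b + k) p.1 / p.1.factorial * (x : ℂ) ^ p.1)]
  simp only [hnorm]
  refine ⟨fun k => (hin k).mul_left _, ?_⟩
  have hpx : 0 < 1 - |x| := by linarith
  have hpy : 0 < 1 - |y| := by linarith
  set r : ℝ := x * y * ((1 - |x|)⁻¹ * (1 - |y|)⁻¹) with hr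
  have hr1 : ‖(r : ℂ)‖ < 1 := by
    rw [Complex.norm_real, Real.norm_eq_abs, hr, abs_mul, abs_mul,
      abs_of_pos (a := (1 - |x|)⁻¹ * (1 - |y|)⁻¹) (by positivity), ← mul_inv, ← div_eq_mul_inv,
      div_lt_one (by positivity)]
    nlinarith
  have hs := (summable_hyp a b b' r hr1).norm.mul_left ((1 - |x|) ^ (-‖b‖) * (1 - |y|) ^ (-‖b'‖))
  refine Summable.of_nonneg_of_le (fun k => tsum_nonneg fun p => by positivity) (fun k => ?_) hs
  rw [tsum_mul_left, ← (summable_inner b x hx k).1.tsum_mul_tsum (summable_inner b' y hy k).1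
    (hin k)]
  have hm := mul_le_mul (summable_inner b x hx k).2 (summable_inner b' y hy k).2
    (tsum_nonneg fun _ => norm_nonneg _) (by positivity)
  refine (mul_le_mul_of_nonneg_left hm (norm_nonneg _)).trans (le_of_eq ?_)
  have hrk : ‖(r : ℂ) ^ k‖ = ‖((x : ℂ) * y) ^ k‖ * (((1 - |x|)⁻¹) ^ k * ((1 - |y|)⁻¹) ^ k) := by
    rw [norm_pow, norm_pow, ← mul_pow, ← mul_pow, hr]
    push_cast
    rw [norm_mul, ← Complex.ofReal_one, ← Complex.ofReal_sub, ← Complex.ofReal_sub,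
      ← Complex.ofReal_inv, ← Complex.ofReal_inv, ← Complex.ofReal_mul (1 - |x|)⁻¹,
      Complex.norm_real (_ * _), Real.norm_eq_abs, abs_of_pos]
    positivity
  rw [norm_mul, norm_mul _ ((r : ℂ) ^ k), hrk]
  ring

/-- The triple series, other indexing. -/
noncomputable def trg (a b b' x y : ℂ) (q : (ℕ × ℕ) × ℕ) : ℂ :=
  (poch b q.1.1 * poch b' q.1.2 / (q.1.1.factorial * q.1.2.factorial) * x ^ q.1.1 * y ^ q.1.2) *
    ((q.1.1.choose q.2 : ℂ) * q.1.2.choose q.2 * q.2.factorial / poch a q.2)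

def idx (q : ℕ × ℕ × ℕ) : (ℕ × ℕ) × ℕ := ((q.1 + q.2.1, q.1 + q.2.2), q.1)

lemma idx_inj : Function.Injective idx := by
  rintro ⟨k, i, j⟩ ⟨k', i', j'⟩ h
  simp only [idx, Prod.mk.injEq] at h ⊢
  omega

lemma trg_idx (a b b' x y : ℂ) (q : ℕ × ℕ × ℕ) :
    trg a b b' x y (idx q) = tri a b b' x y q := by
  obtain ⟨k, i, j⟩ := q
  simp only [trg, tri, idx]
  have h : ∀ i : ℕ, ((k + i).choose k : ℂ) = (k + i).factorial / (k.factorial * i.factorial) := by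
    intro i
    rw [eq_div_iff (by exact_mod_cast mul_ne_zero k.factorial_ne_zero i.factorial_ne_zero),
      ← mul_assoc]
    rw [Nat.choose_symm_add]
    exact_mod_cast Nat.add_choose_mul_factorial_mul_factorial k i
  have h1 : (k.factorial : ℂ) ≠ 0 := by exact_mod_cast k.factorial_ne_zero
  have h2 : ((k + i).factorial : ℂ) ≠ 0 := by exact_mod_cast (k + i).factorial_ne_zero
  have h3 : ((k + j).factorial : ℂ) ≠ 0 := by exact_mod_cast (k + j).factorial_ne_zero
  rw [h, h, poch_add, poch_add]
  field_simp
  ring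

lemma trg_support (a b b' x y : ℂ) (q : (ℕ × ℕ) × ℕ) (hq : q ∉ Set.range idx) :
    trg a b b' x y q = 0 := by
  obtain ⟨⟨m, n⟩, k⟩ := q
  by_cases hm : m < k
  · simp [trg, Nat.choose_eq_zero_of_lt hm]
  by_cases hn : n < k
  · simp [trg, Nat.choose_eq_zero_of_lt hn]
  exact absurd ⟨(k, m - k, n - k), by simp [idx]; omega⟩ hq

theorem appellF2_reduction_c_eq_a (a b b' : ℂ) (x y : ℝ)
    (ha : ∀ n : ℕ, a ≠ -(n : ℂ))
    (hxy : |x| + |y| < 1) (hxy' : |x * y / ((1 - x) * (1 - y))| < 1) :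
    appellF2 a b b' a a x y =
      ((1 : ℂ) - x) ^ (-b) * ((1 : ℂ) - y) ^ (-b') *
        hyp2F1 b b' a ((x : ℂ) * y / ((1 - x) * (1 - y))) := by
  have hx : |x| < 1 := by linarith [abs_nonneg y]
  have hy : |y| < 1 := by linarith [abs_nonneg x]
  have hS := summable_tri a b b' x y hxy
  have hcomp : trg a b b' x y ∘ idx = tri a b b' x y := funext (trg_idx a b b' x y)
  have hG : HasSum (trg a b b' x y) (∑' q, tri a b b' x y q) := by
    rw [← idx_inj.hasSum_iff (trg_support a b b' x y), hcomp]
    exact hS.hasSum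
  have hL : appellF2 a b b' a a x y = ∑' q, trg a b b' x y q := by
    rw [hG.summable.tsum_prod, appellF2]
    refine tsum_congr fun p => ?_
    obtain ⟨m, n⟩ := p
    rw [tsum_eq_sum (s := Finset.range (m + 1))]
    · simp only [trg]
      rw [← Finset.mul_sum]
      have hv := poch_vandermonde m n a ha
      have h1 := poch_ne_zero ha m
      have h2 := poch_ne_zero ha n
      rw [poch_add, hv]
      field_simp
    · intro k hk
      have : m < k := by simpa using hk
      simp [trg, Nat.choose_eq_zero_of_lt this]
  rw [hL, hG.tsum_eq, hS.tsum_prod, hyp2F1, ← tsum_mul_left]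
  refine tsum_congr fun k => ?_
  have hbx := hasSum_binomial (b + k) x (by simpa using hx)
  have hby := hasSum_binomial (b' + k) y (by simpa using hy)
  have hx0 : (1 : ℂ) - x ≠ 0 := by
    rw [← Complex.ofReal_one, ← Complex.ofReal_sub, Complex.ofReal_ne_zero]
    linarith [le_abs_self x]
  have hy0 : (1 : ℂ) - y ≠ 0 := by
    rw [← Complex.ofReal_one, ← Complex.ofReal_sub, Complex.ofReal_ne_zero]
    linarith [le_abs_self y]
  simp only [tri]
  rw [tsum_mul_left, ← tsum_mul_tsum_of_summable_norm (summable_inner b x hx k).1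
    (summable_inner b' y hy k).1, hbx.tsum_eq, hby.tsum_eq, neg_add, neg_add,
    Complex.cpow_add _ _ hx0, Complex.cpow_add _ _ hy0, Complex.cpow_neg _ (k : ℂ),
    Complex.cpow_neg _ (k : ℂ), Complex.cpow_natCast, Complex.cpow_natCast, div_pow, mul_pow _ _ k,
    mul_pow _ _ k]
  simp only [div_eq_mul_inv, mul_inv]
  ring
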